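/- Let 𝕎 = ⋃_{i=0}^{J−1} 𝕎_i ⊆ [−1/2, 1/2]² be a cubic multiband set consisting of J ≥ 1 pairwise disjoint closed rectangles. Then for all M, N ≥ 2 the eigenvalues of B_{(M,N),𝕎} satisfy Σ_{p=0}^{MN−1} λ_{(M,N),𝕎}^{(p)}·(1 − λ_{(M,N),𝕎}^{(p)}) ≤ (4MJ/π²)·(3 + log N) + (4NJ/π²)·(3 + log M). -/

import Mathlib

open MeasureTheory Matrix Real Set

/-- The 2-D prolate matrix `B_{(M,N),𝕎}`, indexed by pairs, with entries
`∫_𝕎 exp(2πi (f (m−p) + g (n−q))) df dg`. -/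
noncomputable def prolate2D (M N : ℕ) (𝕎 : Set (ℝ × ℝ)) :
    Matrix (Fin M × Fin N) (Fin M × Fin N) ℂ :=
  fun i j => ∫ fg in 𝕎,
    Complex.exp (2 * (Real.pi : ℂ) * Complex.I *
      ((fg.1 : ℂ) * (((i.1 : ℕ) : ℂ) - ((j.1 : ℕ) : ℂ)) +
       (fg.2 : ℂ) * (((i.2 : ℕ) : ℂ) - ((j.2 : ℕ) : ℂ))))

/-- The closed rectangle `[f0 − W0, f0 + W0] × [f1 − W1, f1 + W1] ⊆ ℝ²`. -/
def rect2 (f0 f1 W0 W1 : ℝ) : Set (ℝ × ℝ) :=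
  Set.Icc (f0 - W0) (f0 + W0) ×ˢ Set.Icc (f1 - W1) (f1 + W1)

/-!
The sum of `λ (1 - λ)` over the eigenvalues of a Hermitian matrix `B` is `tr B - tr B²`. For a
union of rectangles `B` is the sum of the matrices `Bᵢ` of the rectangles, and dropping the cross
terms `tr (Bᵢ Bⱼ) ≥ 0` of positive semidefinite matrices leaves one such expression per rectangle.

For a rectangle `S × T` the matrix is the Kronecker product of the Toeplitz matrices `P` and `Q`
with entries the Fourier coefficients `c_d` of the indicator functions of `S` and `T`, so
`tr B - tr B² = M |S| N |T| - ‖P‖_F² ‖Q‖_F²`. By Parseval `|S| = ∑ |c_d|²`, hence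
`M |S| - ‖P‖_F²` is the sum over `m < M` of the tails `∑_{|d| > m} |c_d|²`. Since
`|c_d| ≤ 1 / (π |d|)`, the tail at `m` is at most `4 / (π² (m + 1))`, and these bounds add up to
`4 / π²` times a harmonic number.
-/

section Trace

variable {n ι 𝕜 : Type*} [Fintype n] [RCLike 𝕜]

theorem trace_mul_self_of_isHermitian {A : Matrix n n 𝕜} (hA : A.IsHermitian) :
    (A * A).trace = ((∑ i, ∑ j, ‖A i j‖ ^ 2 : ℝ) : 𝕜) := by
  simp only [Matrix.trace, diag_apply, mul_apply, RCLike.ofReal_sum, RCLike.ofReal_pow]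
  refine Finset.sum_congr rfl fun i _ ↦ Finset.sum_congr rfl fun j _ ↦ ?_
  rw [← hA.apply j i, RCLike.star_def, RCLike.mul_conj]

theorem sum_eigenvalues_mul_one_sub [DecidableEq n] {A : Matrix n n 𝕜} (hA : A.IsHermitian) :
    ∑ i, hA.eigenvalues i * (1 - hA.eigenvalues i) = RCLike.re (A * (1 - A)).trace := by
  have trace_sq : (A * A).trace = ∑ i, (hA.eigenvalues i : 𝕜) * hA.eigenvalues i := by
    conv_lhs => rw [hA.spectral_theorem, ← map_mul, Unitary.conjStarAlgAut_apply,
      Matrix.trace_mul_comm, ← mul_assoc]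
    simp [Matrix.trace]
  rw [mul_sub, mul_one, trace_sub, trace_sq, hA.trace_eq_sum_eigenvalues,
    ← Finset.sum_sub_distrib, map_sum]
  refine Finset.sum_congr rfl fun i _ ↦ ?_
  rw [← RCLike.ofReal_mul, ← RCLike.ofReal_sub, RCLike.ofReal_re]
  ring

open scoped ComplexOrder MatrixOrder

theorem re_trace_mul_nonneg_of_posSemidef {A B : Matrix n n 𝕜}
    (hA : A.PosSemidef) (hB : B.PosSemidef) : 0 ≤ RCLike.re (A * B).trace := by
  classical
  obtain ⟨C, rfl⟩ := CStarAlgebra.nonneg_iff_eq_star_mul_self.mp hA.nonneg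
  rw [mul_assoc, Matrix.trace_mul_comm, star_eq_conjTranspose]
  exact (RCLike.nonneg_iff.mp (hB.mul_mul_conjTranspose_same C).trace_nonneg).1

theorem re_trace_sum_mul_one_sub_sum_le [DecidableEq n] [Fintype ι] {B : ι → Matrix n n 𝕜}
    (hB : ∀ i, (B i).PosSemidef) :
    RCLike.re ((∑ i, B i) * (1 - ∑ i, B i)).trace ≤
      ∑ i, RCLike.re (B i * (1 - B i)).trace := by
  have diagonal_le : ∑ i, RCLike.re (B i * B i).trace ≤
      RCLike.re ((∑ i, B i) * ∑ i, B i).trace := by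
    simp only [Finset.sum_mul_sum, trace_sum, map_sum]
    exact Finset.sum_le_sum fun i _ ↦ Finset.single_le_sum
      (f := fun j ↦ RCLike.re (B i * B j).trace)
      (fun j _ ↦ re_trace_mul_nonneg_of_posSemidef (hB i) (hB j)) (Finset.mem_univ i)
  simp only [mul_sub, mul_one, trace_sub, map_sub, Finset.sum_sub_distrib]
  rw [trace_sum, map_sum]
  gcongr

theorem posSemidef_integral_star_mul {α m : Type*} [Finite m] [MeasurableSpace α] {μ : Measure α}
    {φ : m → α → 𝕜} (hφ : ∀ i, MemLp (φ i) 2 μ) :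
    (Matrix.of fun i j ↦ ∫ x, star (φ i x) * φ j x ∂μ).PosSemidef := by
  convert posSemidef_gram 𝕜 fun i ↦ (hφ i).toLp
  ext i j
  rw [gram_apply, L2.inner_def, of_apply]
  refine integral_congr_ae ?_
  filter_upwards [(hφ i).coeFn_toLp, (hφ j).coeFn_toLp] with x hi hj
  rw [hi, hj, RCLike.inner_apply', RCLike.star_def]

end Trace

section ToeplitzSum

/-- The sum of all entries of the `M × M` Toeplitz matrix `(a (m - p))`. With `a d = ‖c d‖ ^ 2` it
is the squared Frobenius norm of the Toeplitz matrix `(c (m - p))`. -/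
def toeplitzSum (a : ℤ → ℝ) (M : ℕ) : ℝ :=
  ∑ m : Fin M, ∑ p : Fin M, a ((m : ℤ) - (p : ℤ))

variable {a : ℤ → ℝ} {s C : ℝ}

theorem toeplitzSum_succ (a : ℤ → ℝ) (M : ℕ) :
    toeplitzSum a (M + 1) =
      toeplitzSum a M + a 0 + ∑ k ∈ Finset.range M, (a (k + 1) + a (-(k + 1))) := by
  have last_row : ∑ p : Fin M, a ((M : ℤ) - (p : ℤ)) = ∑ k ∈ Finset.range M, a (k + 1) := by
    rw [← Finset.sum_range_reflect, Finset.sum_range]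
    exact Finset.sum_congr rfl fun p _ ↦ congrArg a (by omega)
  have last_column : ∑ m : Fin M, a ((m : ℤ) - (M : ℤ)) =
      ∑ k ∈ Finset.range M, a (-(k + 1)) := by
    rw [← Finset.sum_range_reflect, Finset.sum_range]
    exact Finset.sum_congr rfl fun m _ ↦ congrArg a (by omega)
  simp only [toeplitzSum, Fin.sum_univ_castSucc, Fin.val_castSucc, Fin.val_last,
    Finset.sum_add_distrib, last_row, last_column, sub_self]
  ring

theorem hasSum_int_symm_sub_zero (hs : HasSum a s) :
    HasSum (fun k : ℕ ↦ a (k + 1) + a (-(k + 1))) (s - a 0) := by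
  have := (hasSum_nat_add_iff' 1).mpr hs.nat_add_neg
  simpa [add_sub_add_right_eq_sub] using this

theorem natCast_mul_sub_toeplitzSum_succ (M : ℕ) :
    ((M + 1 : ℕ) : ℝ) * s - toeplitzSum a (M + 1) = (M * s - toeplitzSum a M) +
      (s - a 0 - ∑ k ∈ Finset.range M, (a (k + 1) + a (-(k + 1)))) := by
  rw [toeplitzSum_succ]
  push_cast
  ring

theorem toeplitzSum_le (ha : 0 ≤ a) (hs : HasSum a s) (M : ℕ) : toeplitzSum a M ≤ M * s := by
  rw [← sub_nonneg]
  induction M with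
  | zero => simp [toeplitzSum]
  | succ M ih =>
    rw [natCast_mul_sub_toeplitzSum_succ]
    exact add_nonneg ih <| sub_nonneg.mpr <| sum_le_hasSum _
      (fun _ _ ↦ add_nonneg (ha _) (ha _)) (hasSum_int_symm_sub_zero hs)

theorem hasSum_sub_sum_range_le {b : ℕ → ℝ} (hb : 0 ≤ b) (hs : HasSum b s)
    (hdecay : ∀ k, b k * (k + 1) ^ 2 ≤ C) (m : ℕ) :
    s - ∑ k ∈ Finset.range m, b k ≤ 2 * C * (m + 1 : ℝ)⁻¹ := by
  have hC : 0 ≤ C := (mul_nonneg (hb 0) (by positivity)).trans (hdecay 0)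
  have htail := (hasSum_nat_add_iff' m).mpr hs
  refine htail.tsum_eq ▸ Real.tsum_le_of_sum_range_le (fun _ ↦ hb _) fun n ↦ ?_
  calc ∑ i ∈ Finset.range n, b (i + m)
      ≤ ∑ i ∈ Finset.range n, C * (((m + 1 + i : ℕ) : ℝ) ^ 2)⁻¹ := by
        refine Finset.sum_le_sum fun i _ ↦ ?_
        rw [← div_eq_mul_inv, le_div_iff₀ (by positivity), add_right_comm, add_comm m i]
        exact_mod_cast hdecay (i + m)
    _ = C * ∑ i ∈ Finset.Ioo m (m + 1 + n), ((i : ℝ) ^ 2)⁻¹ := by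
        rw [← Finset.mul_sum, ← Finset.Ico_add_one_left_eq_Ioo, Finset.sum_Ico_eq_sum_range,
          Nat.add_sub_cancel_left]
    _ ≤ C * (2 / (m + 1)) := by
        gcongr
        exact sum_Ioo_inv_sq_le m _
    _ = 2 * C * (m + 1 : ℝ)⁻¹ := by ring

theorem natCast_mul_sub_toeplitzSum_le (ha : 0 ≤ a) (hs : HasSum a s)
    (hdecay : ∀ d, a d * (d : ℝ) ^ 2 ≤ C) (M : ℕ) :
    M * s - toeplitzSum a M ≤ 4 * C * harmonic M := by
  have symm_decay (k : ℕ) : (a (k + 1) + a (-(k + 1))) * ((k : ℝ) + 1) ^ 2 ≤ 2 * C := by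
    have hpos := hdecay (k + 1)
    have hneg := hdecay (-(k + 1))
    push_cast at hpos hneg
    linarith
  induction M with
  | zero => simp [toeplitzSum]
  | succ M ih =>
    have htail := hasSum_sub_sum_range_le (fun _ ↦ add_nonneg (ha _) (ha _))
      (hasSum_int_symm_sub_zero hs) symm_decay M
    rw [natCast_mul_sub_toeplitzSum_succ, harmonic_succ]
    push_cast
    linarith

end ToeplitzSum

section Prolate

open scoped ComplexOrder Function Kronecker

/-- The Fourier coefficient `∫_S exp(2πi d x) dx` of the indicator function of a frequency
band `S`; these are the entries of the prolate matrices. -/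
noncomputable def bandCoeff (S : Set ℝ) (d : ℤ) : ℂ :=
  ∫ x in S, Complex.exp (2 * π * Complex.I * d * x)

/-- The one-dimensional prolate matrix of a frequency band `S`. -/
noncomputable def prolate (M : ℕ) (S : Set ℝ) : Matrix (Fin M) (Fin M) ℂ :=
  Matrix.of fun m p ↦ bandCoeff S ((m : ℤ) - (p : ℤ))

theorem bandCoeff_zero (S : Set ℝ) : bandCoeff S 0 = volume.real S := by
  simp [bandCoeff]

theorem bandCoeff_Icc {a b : ℝ} (hab : a ≤ b) {d : ℤ} (hd : d ≠ 0) :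
    bandCoeff (Icc a b) d =
      (Complex.exp (2 * π * Complex.I * d * b) - Complex.exp (2 * π * Complex.I * d * a)) /
        (2 * π * Complex.I * d) := by
  rw [bandCoeff, integral_Icc_eq_integral_Ioc, ← intervalIntegral.integral_of_le hab]
  exact integral_exp_mul_complex (by simp [hd, pi_ne_zero])

theorem norm_bandCoeff_Icc_sq_mul_le {a b : ℝ} (hab : a ≤ b) (d : ℤ) :
    ‖bandCoeff (Icc a b) d‖ ^ 2 * (d : ℝ) ^ 2 ≤ 1 / π ^ 2 := by
  rcases eq_or_ne d 0 with rfl | hd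
  · simpa using sq_nonneg π
  have norm_exp (x : ℝ) : ‖Complex.exp (2 * π * Complex.I * d * x)‖ = 1 := by
    simp [Complex.norm_exp]
  have norm_sub_le_two : ‖Complex.exp (2 * π * Complex.I * d * b) -
      Complex.exp (2 * π * Complex.I * d * a)‖ ≤ 2 :=
    (norm_sub_le _ _).trans_eq (by rw [norm_exp, norm_exp]; norm_num)
  rw [← sq_abs (d : ℝ), ← mul_pow, ← _root_.one_div_pow]
  gcongr
  rw [bandCoeff_Icc hab hd, norm_div]
  simp only [norm_mul, Complex.norm_I, Complex.norm_intCast, Complex.norm_real,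
    norm_of_nonneg pi_pos.le, RCLike.norm_ofNat]
  field_simp
  linarith

theorem hasSum_norm_bandCoeff_sq {a : ℝ} {S : Set ℝ} (hS : MeasurableSet S)
    (hSa : S ⊆ Icc a (a + 1)) :
    HasSum (fun d ↦ ‖bandCoeff S d‖ ^ 2) (volume.real S) := by
  have ha : a < a + 1 := lt_add_one a
  have integral_indicator {E : Type} [NormedAddCommGroup E] [NormedSpace ℝ E] (f : ℝ → E) :
      ∫ x in a..a + 1, S.indicator f x = ∫ x in S, f x := by
    rw [intervalIntegral.integral_of_le ha.le, ← integral_Icc_eq_integral_Ioc,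
      setIntegral_indicator hS, inter_eq_self_of_subset_right hSa]
  have fourierCoeffOn_indicator (d : ℤ) :
      fourierCoeffOn ha (S.indicator fun _ ↦ (1 : ℂ)) d = bandCoeff S (-d) := by
    have smul_indicator (x : ℝ) :
        fourier (-d) (x : AddCircle (a + 1 - a)) • S.indicator (fun _ ↦ (1 : ℂ)) x =
          S.indicator (fun x : ℝ ↦ Complex.exp (2 * π * Complex.I * (-d : ℤ) * x)) x := by
      rw [fourier_coe_apply]
      by_cases hx : x ∈ S <;> simp [hx]
    rw [fourierCoeffOn_eq_integral, bandCoeff, ← integral_indicator]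
    simp only [smul_indicator, add_sub_cancel_left, div_one, one_smul]
  have integral_norm_sq :
      ∫ x in a..a + 1, ‖S.indicator (fun _ ↦ (1 : ℂ)) x‖ ^ 2 = volume.real S := by
    rw [← setIntegral_one_eq_measureReal, ← integral_indicator]
    congr with x
    by_cases hx : x ∈ S <;> simp [hx]
  have parseval := hasSum_sq_fourierCoeffOn ha ((memLp_const 1).indicator hS)
  simp only [fourierCoeffOn_indicator, integral_norm_sq, add_sub_cancel_left, inv_one,
    one_smul] at parseval
  rw [← (Equiv.neg ℤ).hasSum_iff]
  exact parseval

theorem prolate_posSemidef (M : ℕ) {S : Set ℝ} (hS : volume S ≠ ⊤) :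
    (prolate M S).PosSemidef := by
  have : IsFiniteMeasure (volume.restrict S) := isFiniteMeasure_restrict.mpr hS
  have memLp_exp (m : Fin M) :
      MemLp (fun x : ℝ ↦ Complex.exp (2 * π * Complex.I * (-m) * x)) 2 (volume.restrict S) :=
    .of_bound (by fun_prop) 1 (by simp [Complex.norm_exp])
  have prolate_eq_gram : prolate M S = Matrix.of fun m p : Fin M ↦ ∫ x in S,
      star (Complex.exp (2 * π * Complex.I * (-m) * x)) *
        Complex.exp (2 * π * Complex.I * (-p) * x) := by
    ext m p
    simp only [prolate, bandCoeff, of_apply, Complex.star_def, ← Complex.exp_conj,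
      ← Complex.exp_add]
    congr with x
    simp only [map_mul, map_neg, map_natCast, map_ofNat, Complex.conj_I, Complex.conj_ofReal]
    push_cast
    ring_nf
  rw [prolate_eq_gram]
  exact posSemidef_integral_star_mul memLp_exp

theorem trace_prolate (M : ℕ) (S : Set ℝ) :
    (prolate M S).trace = ((M * volume.real S : ℝ) : ℂ) := by
  simp [Matrix.trace, prolate, bandCoeff_zero]

theorem trace_prolate_mul_self (M : ℕ) {S : Set ℝ} (hS : volume S ≠ ⊤) :
    (prolate M S * prolate M S).trace = (toeplitzSum (fun d ↦ ‖bandCoeff S d‖ ^ 2) M : ℂ) :=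
  trace_mul_self_of_isHermitian (prolate_posSemidef M hS).isHermitian

theorem prolate2D_prod (M N : ℕ) (S T : Set ℝ) :
    prolate2D M N (S ×ˢ T) = prolate M S ⊗ₖ prolate N T := by
  ext i j
  simp only [prolate2D, kroneckerMap_apply, prolate, of_apply, bandCoeff]
  rw [Measure.volume_eq_prod, ← setIntegral_prod_mul]
  congr with z
  rw [← Complex.exp_add]
  push_cast
  ring_nf

theorem prolate2D_prod_posSemidef (M N : ℕ) {S T : Set ℝ} (hS : volume S ≠ ⊤)
    (hT : volume T ≠ ⊤) : (prolate2D M N (S ×ˢ T)).PosSemidef := by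
  rw [prolate2D_prod]
  exact (prolate_posSemidef M hS).kronecker (prolate_posSemidef N hT)

theorem prolate2D_iUnion {ι : Type*} [Fintype ι] (M N : ℕ) {s : ι → Set (ℝ × ℝ)}
    (hs : ∀ i, NullMeasurableSet (s i)) (hdisj : Pairwise (AEDisjoint volume on s))
    (hfin : ∀ i, volume (s i) ≠ ⊤) :
    prolate2D M N (⋃ i, s i) = ∑ i, prolate2D M N (s i) := by
  ext m p
  simp only [Matrix.sum_apply, prolate2D]
  rw [integral_iUnion_ae hs hdisj, tsum_fintype]
  refine integrableOn_finite_iUnion.mpr fun i ↦ ?_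
  have : IsFiniteMeasure (volume.restrict (s i)) := isFiniteMeasure_restrict.mpr (hfin i)
  exact Integrable.of_bound (by fun_prop) 1 (.of_forall fun z ↦ by simp [Complex.norm_exp])

theorem toeplitzSum_bandCoeff_Icc_le {a b : ℝ} (hab : a ≤ b) (hba : b ≤ a + 1) (M : ℕ) :
    toeplitzSum (fun d ↦ ‖bandCoeff (Icc a b) d‖ ^ 2) M ≤ M * (b - a) := by
  rw [← volume_real_Icc_of_le hab]
  exact toeplitzSum_le (fun _ ↦ sq_nonneg _)
    (hasSum_norm_bandCoeff_sq measurableSet_Icc (Icc_subset_Icc_right hba)) M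

theorem natCast_mul_sub_toeplitzSum_bandCoeff_Icc_le {a b : ℝ} (hab : a ≤ b) (hba : b ≤ a + 1)
    (M : ℕ) :
    M * (b - a) - toeplitzSum (fun d ↦ ‖bandCoeff (Icc a b) d‖ ^ 2) M ≤
      4 / π ^ 2 * harmonic M := by
  rw [← volume_real_Icc_of_le hab, ← mul_one_div]
  exact natCast_mul_sub_toeplitzSum_le (fun _ ↦ sq_nonneg _)
    (hasSum_norm_bandCoeff_sq measurableSet_Icc (Icc_subset_Icc_right hba))
    (norm_bandCoeff_Icc_sq_mul_le hab) M

theorem re_trace_prolate2D_Icc_prod_Icc_le {a b c d : ℝ} (hab : a ≤ b) (hba : b ≤ a + 1)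
    (hcd : c ≤ d) (hdc : d ≤ c + 1) (M N : ℕ) :
    (prolate2D M N (Icc a b ×ˢ Icc c d) * (1 - prolate2D M N (Icc a b ×ˢ Icc c d))).trace.re ≤
      4 / π ^ 2 * (M * harmonic N + N * harmonic M) := by
  set A := toeplitzSum (fun k ↦ ‖bandCoeff (Icc a b) k‖ ^ 2) M
  set B := toeplitzSum (fun k ↦ ‖bandCoeff (Icc c d) k‖ ^ 2) N
  have trace_eq :
      (prolate2D M N (Icc a b ×ˢ Icc c d) * (1 - prolate2D M N (Icc a b ×ˢ Icc c d))).trace =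
        ((M * (b - a) * (N * (d - c)) - A * B : ℝ) : ℂ) := by
    rw [prolate2D_prod, mul_sub, mul_one, ← mul_kronecker_mul, trace_sub, trace_kronecker,
      trace_kronecker, trace_prolate, trace_prolate,
      trace_prolate_mul_self M measure_Icc_lt_top.ne,
      trace_prolate_mul_self N measure_Icc_lt_top.ne, volume_real_Icc_of_le hab,
      volume_real_Icc_of_le hcd]
    push_cast
    rfl
  have hA : A ≤ M * (b - a) := toeplitzSum_bandCoeff_Icc_le hab hba M
  have hB : B ≤ N * (d - c) := toeplitzSum_bandCoeff_Icc_le hcd hdc N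
  have hA_deficit : M * (b - a) - A ≤ 4 / π ^ 2 * harmonic M :=
    natCast_mul_sub_toeplitzSum_bandCoeff_Icc_le hab hba M
  have hB_deficit : N * (d - c) - B ≤ 4 / π ^ 2 * harmonic N :=
    natCast_mul_sub_toeplitzSum_bandCoeff_Icc_le hcd hdc N
  have hM : M * (b - a) ≤ M := mul_le_of_le_one_right M.cast_nonneg (by linarith)
  have hN : N * (d - c) ≤ N := mul_le_of_le_one_right N.cast_nonneg (by linarith)
  have hN_nonneg : 0 ≤ N * (d - c) := mul_nonneg N.cast_nonneg (sub_nonneg.mpr hcd)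
  rw [trace_eq, Complex.ofReal_re]
  calc M * (b - a) * (N * (d - c)) - A * B
      = A * (N * (d - c) - B) + (M * (b - a) - A) * (N * (d - c)) := by ring
    _ ≤ M * (4 / π ^ 2 * harmonic N) + 4 / π ^ 2 * harmonic M * N :=
        add_le_add
          (mul_le_mul (hA.trans hM) hB_deficit (sub_nonneg.mpr hB) M.cast_nonneg)
          (mul_le_mul hA_deficit hN hN_nonneg ((sub_nonneg.mpr hA).trans hA_deficit))
    _ = 4 / π ^ 2 * (M * harmonic N + N * harmonic M) := by ring

theorem cubic_multiband_eigenvalue_transition_sum_general {ι : Type*} [Fintype ι]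
    {f0 f1 W0 W1 : ι → ℝ} (hW0 : ∀ i, W0 i ∈ Icc (0 : ℝ) (1 / 2))
    (hW1 : ∀ i, W1 i ∈ Icc (0 : ℝ) (1 / 2))
    (hdisj : Pairwise (AEDisjoint volume on fun i ↦ rect2 (f0 i) (f1 i) (W0 i) (W1 i)))
    (M N : ℕ) (hA : (prolate2D M N (⋃ i, rect2 (f0 i) (f1 i) (W0 i) (W1 i))).IsHermitian) :
    ∑ p, hA.eigenvalues p * (1 - hA.eigenvalues p) ≤
      Fintype.card ι * (4 / π ^ 2 * (M * harmonic N + N * harmonic M)) := by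
  have rect_compact (i : ι) : IsCompact (rect2 (f0 i) (f1 i) (W0 i) (W1 i)) :=
    isCompact_Icc.prod isCompact_Icc
  have rect_posSemidef (i : ι) :
      (prolate2D M N (rect2 (f0 i) (f1 i) (W0 i) (W1 i))).PosSemidef :=
    prolate2D_prod_posSemidef M N measure_Icc_lt_top.ne measure_Icc_lt_top.ne
  rw [sum_eigenvalues_mul_one_sub hA, prolate2D_iUnion M N
    (fun i ↦ (rect_compact i).measurableSet.nullMeasurableSet) hdisj
    (fun i ↦ (rect_compact i).measure_ne_top), ← nsmul_eq_mul, ← Finset.card_univ]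
  refine (re_trace_sum_mul_one_sub_sum_le rect_posSemidef).trans
    (Finset.sum_le_card_nsmul _ _ _ fun i _ ↦ ?_)
  obtain ⟨⟨hW0_nonneg, hW0_le⟩, hW1_nonneg, hW1_le⟩ := And.intro (hW0 i) (hW1 i)
  exact re_trace_prolate2D_Icc_prod_Icc_le (by linarith) (by linarith) (by linarith)
    (by linarith) M N

end Prolate

theorem cubic_multiband_eigenvalue_transition_sum
    (J : ℕ) (hJ : 1 ≤ J) (f0 f1 W0 W1 : Fin J → ℝ)
    (hW0 : ∀ i, W0 i ∈ Set.Ioo (0 : ℝ) (1 / 2)) (hW1 : ∀ i, W1 i ∈ Set.Ioo (0 : ℝ) (1 / 2))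
    (hsub : ∀ i, rect2 (f0 i) (f1 i) (W0 i) (W1 i) ⊆
      Set.Icc (-(1 / 2) : ℝ) (1 / 2) ×ˢ Set.Icc (-(1 / 2) : ℝ) (1 / 2))
    (hdisj : ∀ i j, i ≠ j →
      Disjoint (rect2 (f0 i) (f1 i) (W0 i) (W1 i)) (rect2 (f0 j) (f1 j) (W0 j) (W1 j)))
    (M N : ℕ) (hM : 2 ≤ M) (hN : 2 ≤ N)
    (hA : (prolate2D M N (⋃ i, rect2 (f0 i) (f1 i) (W0 i) (W1 i))).IsHermitian)
    (μ : Fin (M * N) → ℝ) (hμ : Antitone μ)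
    (hperm : ∃ e : (Fin M × Fin N) ≃ Fin (M * N), hA.eigenvalues = μ ∘ e) :
    ∑ p : Fin (M * N), μ p * (1 - μ p) ≤
      (4 * (M : ℝ) * (J : ℝ) / Real.pi ^ 2) * (3 + Real.log (N : ℝ)) +
      (4 * (N : ℝ) * (J : ℝ) / Real.pi ^ 2) * (3 + Real.log (M : ℝ)) := by
  obtain ⟨e, he⟩ := hperm
  have harmonic_le (n : ℕ) : (harmonic n : ℝ) ≤ 3 + log n := by
    linarith [harmonic_le_one_add_log n]
  calc ∑ p, μ p * (1 - μ p)
      = ∑ i, hA.eigenvalues i * (1 - hA.eigenvalues i) := by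
        rw [he]
        exact (e.sum_comp fun p ↦ μ p * (1 - μ p)).symm
    _ ≤ J * (4 / π ^ 2 * (M * harmonic N + N * harmonic M)) := by
        simpa only [Fintype.card_fin] using cubic_multiband_eigenvalue_transition_sum_general
          (fun i ↦ Ioo_subset_Icc_self (hW0 i)) (fun i ↦ Ioo_subset_Icc_self (hW1 i))
          (fun i j hij ↦ (hdisj i j hij).aedisjoint) M N hA
    _ ≤ J * (4 / π ^ 2 * (M * (3 + log N) + N * (3 + log M))) := by
        gcongr <;> exact harmonic_le _
    _ = 4 * M * J / π ^ 2 * (3 + log N) + 4 * N * J / π ^ 2 * (3 + log M) := by ring
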